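/- For every n > k and every m ≥ 0, the dimension of the space of polynomials in F_n^{(k,r)} homogeneous of degree m equals the number of pairs (λ, μ) where λ ∈ π_n is an admissible partition, μ ∈ π_n is an (r−1)-slim partition, and (r−1)|λ| + |μ| = m. Equivalently, as formal power series in v, Σ_m dim(F_{n,m}^{(k,r)}) v^m = b_n^{(k)}(v^{r−1}) · ∏_{s=1}^n (1 − v^{s(r−1)})/(1 − v^s), where b_n^{(k)}(v) = Σ_m #{admissible λ ∈ π_n with |λ| = m} v^m. -/

import Mathlib

open MvPolynomial

/-- `l` is an `(r-1)`-slim partition of length at most `n`: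
consecutive differences are `< r-1` and the last part is `< r-1`. -/
def IsSlim (r n : ℕ) (l : Fin n → ℕ) : Prop :=
  (∀ i : Fin n, ∀ h : (i : ℕ) + 1 < n, l i - l ⟨(i : ℕ) + 1, h⟩ < r - 1) ∧
  (∀ i : Fin n, (i : ℕ) = n - 1 → l i < r - 1)

/-!
Write `R = r - 1` and `τ = t ^ R`, a primitive `(k + 1)`-th root of unity. The wheel condition says
that `f` vanishes wherever the powers `x j ^ R` lie on the wheel plane `y j = τ ^ j * y 0`, `j ≤ k`.

For symmetric polynomials vanishing on the wheel plane itself, the Hall–Littlewood polynomials `P_λ`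
at `τ` with `λ` admissible form a basis. They vanish there because every term of the symmetrized sum
does. By leading terms, every symmetric polynomial is congruent modulo their span to one supported
on non-admissible exponents, and such a polynomial vanishing on the plane is zero: if the exponent
`b` of maximal `∑ b j ^ 2` is permuted so that its first `k + 1` entries agree, no other exponent
contributes to the coefficient of its restriction to the plane.

Symmetric polynomials in `x` are spanned over symmetric polynomials in `x ^ R` by the symmetrized
monomials `m_μ` with `μ` slim, by division with remainder of the gaps of the leading exponent. At a
generic point these `m_μ` take linearly independent values along the orbit `q ^ s j * x j`, so
`∑ g_μ(x ^ R) * m_μ` satisfies the wheel condition if and only if every `g_μ` vanishes on the wheel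
plane. Hence the products `P_λ(x ^ R) * m_μ` form a homogeneous basis of `F_n^{(k,r)}`.
-/

namespace WheelCondition

/-! ### Leading exponents -/

section MonomialOrder

variable {σ : Type*} (m : MonomialOrder σ)

theorem degree_eq_of_coeff_ne_zero {R : Type*} [CommSemiring R] {f : MvPolynomial σ R}
    {d : σ →₀ ℕ} (hd : coeff d f ≠ 0) (hle : ∀ e, coeff e f ≠ 0 → m.toSyn e ≤ m.toSyn d) :
    m.degree f = d := by
  have hf : f ≠ 0 := by rintro rfl; simp at hd
  exact m.toSyn.injective <| le_antisymm (hle _ (m.coeff_degree_ne_zero_iff.2 hf))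
    (m.le_degree (mem_support_iff.2 hd))

theorem degree_expand {R : Type*} [CommSemiring R] {p : ℕ} (hp : p ≠ 0) (f : MvPolynomial σ R) :
    m.degree (expand p f) = p • m.degree f := by
  classical
  rcases eq_or_ne f 0 with rfl | hf
  · simp
  refine degree_eq_of_coeff_ne_zero m ?_ fun e he => ?_
  · rwa [coeff_expand_smul _ hp, m.coeff_degree_ne_zero_iff]
  · obtain ⟨d, hd, rfl⟩ := Finset.mem_image.1 (support_expand_subset f (mem_support_iff.2 he))
    simpa only [map_nsmul] using nsmul_le_nsmul_right (m.le_degree hd) p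

variable {K : Type*} [Field K]

theorem linearIndependent_of_injective_degree {ι : Type*} {b : ι → MvPolynomial σ K}
    (hb : ∀ i, b i ≠ 0) (hinj : Function.Injective fun i => m.degree (b i)) :
    LinearIndependent K b := by
  classical
  refine linearIndependent_iff'.2 fun s c hsum => ?_
  by_contra! hc
  obtain ⟨i₀, hi₀, hci₀⟩ := hc
  obtain ⟨i, hi, hmax⟩ := (s.filter (c · ≠ 0)).exists_max_image (fun j => m.toSyn (m.degree (b j)))
    ⟨i₀, Finset.mem_filter.2 ⟨hi₀, hci₀⟩⟩
  obtain ⟨his, hci⟩ := Finset.mem_filter.1 hi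
  have hcoeff : c i * coeff (m.degree (b i)) (b i) = 0 := by
    rw [← Finset.sum_eq_single_of_mem (f := fun j => c j * coeff (m.degree (b i)) (b j)) i his,
      ← coeff_zero (R := K) (m.degree (b i)), ← hsum, coeff_sum]
    · simp only [coeff_smul, smul_eq_mul]
    · intro j hj hji
      by_contra! hne
      have hle := hmax j (Finset.mem_filter.2 ⟨hj, left_ne_zero_of_mul hne⟩)
      have hge := m.le_degree (mem_support_iff.2 (right_ne_zero_of_mul hne))
      exact hji (hinj (m.toSyn.injective (le_antisymm hle hge)))
  exact mul_ne_zero hci (m.coeff_degree_ne_zero_iff.2 (hb i)) hcoeff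

theorem degree_sub_smul_lt {f g : MvPolynomial σ K} (hg : g ≠ 0) (hfg : m.degree g = m.degree f)
    (hne : f - (m.leadingCoeff f / m.leadingCoeff g) • g ≠ 0) :
    m.toSyn (m.degree (f - (m.leadingCoeff f / m.leadingCoeff g) • g)) < m.toSyn (m.degree f) := by
  set c := m.leadingCoeff f / m.leadingCoeff g
  have hle : m.toSyn (m.degree (f - c • g)) ≤ m.toSyn (m.degree f) :=
    m.degree_sub_le.trans (sup_le le_rfl (m.degree_smul_le.trans_eq (by rw [hfg])))
  have hcancel : coeff (m.degree f) (f - c • g) = 0 := by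
    rw [coeff_sub, coeff_smul, smul_eq_mul, ← hfg]
    change coeff (m.degree g) f - c * m.leadingCoeff g = 0
    rw [div_mul_cancel₀ _ (m.leadingCoeff_ne_zero_iff.2 hg), hfg]
    exact sub_self _
  refine hle.lt_of_ne fun heq => ?_
  rw [← m.toSyn.injective heq] at hcancel
  exact hne (m.coeff_degree_eq_zero_iff.1 hcancel)

theorem le_of_forall_exists_degree_eq {V N : Submodule K (MvPolynomial σ K)}
    (h : ∀ f ∈ V, f ≠ 0 → ∃ g ∈ V ⊓ N, g ≠ 0 ∧ m.degree g = m.degree f) : V ≤ N := by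
  intro f hf
  induction hd : m.toSyn (m.degree f) using WellFoundedLT.induction generalizing f with
  | ind d ih =>
    subst hd
    rcases eq_or_ne f 0 with rfl | hf0
    · exact N.zero_mem
    obtain ⟨g, ⟨hgV, hgN⟩, hg0, hdeg⟩ := h f hf hf0
    set c := m.leadingCoeff f / m.leadingCoeff g
    suffices f - c • g ∈ N from (N.sub_mem_iff_left (N.smul_mem c hgN)).1 this
    rcases eq_or_ne (f - c • g) 0 with h0 | h0
    · exact h0 ▸ N.zero_mem
    · exact ih _ (degree_sub_smul_lt m hg0 hdeg h0) (V.sub_mem hf (V.smul_mem c hgV)) rfl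

end MonomialOrder

/-! ### Homogeneous and symmetric polynomials -/

section Homogeneous

variable {σ R : Type*}

theorem isHomogeneous_expand [CommSemiring R] {f : MvPolynomial σ R} {d : ℕ}
    (hf : f.IsHomogeneous d) (p : ℕ) : (expand p f).IsHomogeneous (p * d) := by
  classical
  intro e he
  obtain ⟨d', hd', rfl⟩ := Finset.mem_image.1 (support_expand_subset f (mem_support_iff.2 he))
  rw [map_nsmul, smul_eq_mul, hf (mem_support_iff.1 hd')]

theorem isSymmetric_expand [CommSemiring R] {f : MvPolynomial σ R} (hf : f.IsSymmetric) (p : ℕ) :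
    (expand p f).IsSymmetric := fun w => by
  rw [rename_expand, hf w]

theorem isHomogeneous_of_mul_left [CommRing R] [IsDomain R] {f g : MvPolynomial σ R} {a b : ℕ}
    (hf0 : f ≠ 0) (hf : f.IsHomogeneous a) (hfg : (f * g).IsHomogeneous (a + b)) :
    g.IsHomogeneous b := by
  let := gradedAlgebra (σ := σ) (R := R)
  have hmul := DirectSum.coe_decompose_mul_add_of_left_mem (homogeneousSubmodule σ R)
    (a := f) (b := g) (j := b) hf
  rw [DirectSum.decompose_of_mem_same _ hfg] at hmul
  rw [mul_left_cancel₀ hf0 hmul]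
  exact SetLike.coe_mem (DirectSum.decompose (homogeneousSubmodule σ R) g b)

theorem mem_span_image_of_isHomogeneous [CommSemiring R] {ι : Type*} {b : ι → MvPolynomial σ R}
    {deg : ι → ℕ} (hb : ∀ i, (b i).IsHomogeneous (deg i)) {f : MvPolynomial σ R} {d : ℕ}
    (hf : f ∈ Submodule.span R (Set.range b)) (hd : f.IsHomogeneous d) :
    f ∈ Submodule.span R (b '' {i | deg i = d}) := by
  have hcomp := Submodule.mem_map_of_mem (f := homogeneousComponent d) hf
  rw [homogeneousComponent_eq_self hd, Submodule.map_span] at hcomp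
  refine Submodule.span_le.2 ?_ hcomp
  rintro _ ⟨_, ⟨i, rfl⟩, rfl⟩
  rw [homogeneousComponent_of_mem (hb i)]
  split_ifs with hi
  · exact Submodule.subset_span ⟨i, hi.symm, rfl⟩
  · exact Submodule.zero_mem _

end Homogeneous

section Symmetric

variable {n : ℕ}

theorem antitone_of_forall_toLex_mapDomain_le {d : Fin n →₀ ℕ}
    (hd : ∀ w : Equiv.Perm (Fin n), toLex (d.mapDomain w) ≤ toLex d) : Antitone d := by
  intro i j hij
  by_contra! hlt
  refine (hd (Equiv.swap i j)).not_gt (Finsupp.Lex.lt_iff.2 ⟨i, fun a ha => ?_, ?_⟩)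
  · simp [Finsupp.mapDomain_equiv_apply,
      Equiv.swap_apply_of_ne_of_ne ha.ne (ha.trans_le hij).ne]
  · simpa [Finsupp.mapDomain_equiv_apply] using hlt

theorem toLex_mapDomain_le {d : Fin n →₀ ℕ} (hd : Antitone d) (w : Equiv.Perm (Fin n)) :
    toLex (d.mapDomain w) ≤ toLex d := by
  obtain ⟨v, -, hv⟩ := Finset.univ.exists_max_image
    (fun v : Equiv.Perm (Fin n) => toLex (d.mapDomain v)) Finset.univ_nonempty
  have hanti : Antitone (d.mapDomain v) := antitone_of_forall_toLex_mapDomain_le fun u => by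
    rw [← Finsupp.mapDomain_comp]
    exact hv (u * v) (Finset.mem_univ _)
  have hcomp : ⇑(d.mapDomain v) = d ∘ v.symm := funext (Finsupp.mapDomain_equiv_apply d)
  have heq : d.mapDomain v = d := DFunLike.coe_injective <| by
    rw [hcomp] at hanti ⊢
    exact Tuple.unique_antitone (τ := 1) hanti hd
  exact (hv w (Finset.mem_univ w)).trans_eq (by rw [heq])

theorem coeff_mapDomain_of_isSymmetric {σ R : Type*} [CommSemiring R] {f : MvPolynomial σ R}
    (hf : f.IsSymmetric) (w : Equiv.Perm σ) (d : σ →₀ ℕ) :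
    coeff (d.mapDomain w) f = coeff d f := by
  conv_lhs => rw [← hf w, coeff_rename_mapDomain _ w.injective]

theorem antitone_degree_of_isSymmetric {R : Type*} [CommSemiring R] {f : MvPolynomial (Fin n) R}
    (hf : f.IsSymmetric) : Antitone (MonomialOrder.lex.degree f) := by
  rcases eq_or_ne f 0 with rfl | hf0
  · rw [MonomialOrder.degree_zero]
    exact antitone_const
  refine antitone_of_forall_toLex_mapDomain_le fun w => MonomialOrder.lex_le_iff.1 ?_
  refine MonomialOrder.lex.le_degree (mem_support_iff.2 ?_)
  rwa [coeff_mapDomain_of_isSymmetric hf, MonomialOrder.coeff_degree_ne_zero_iff]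

section OrbitSum

variable {R : Type*} [CommRing R] {b : (Fin n →₀ ℕ) → MvPolynomial (Fin n) R}

theorem rename_sum_mapDomain {v : Equiv.Perm (Fin n)} {c : ℤ}
    (hb : ∀ e, rename v (b e) = c • b (e.mapDomain v)) (d : Fin n →₀ ℕ) :
    rename v (∑ w : Equiv.Perm (Fin n), b (d.mapDomain w)) =
      c • ∑ w : Equiv.Perm (Fin n), b (d.mapDomain w) := by
  rw [map_sum, Finset.smul_sum]
  refine Fintype.sum_equiv (Equiv.mulLeft v) _ _ fun w => ?_
  rw [hb, ← Finsupp.mapDomain_comp]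
  rfl

variable {δ : Fin n →₀ ℕ} (hδ : ∀ e, MonomialOrder.lex.degree (b e) = e + δ)
include hδ

theorem coeff_add_sum_mapDomain {d : Fin n →₀ ℕ} (hd : Antitone d) :
    coeff (d + δ) (∑ w : Equiv.Perm (Fin n), b (d.mapDomain w)) =
      (Finset.univ.filter fun w : Equiv.Perm (Fin n) => d.mapDomain w = d).card •
        MonomialOrder.lex.leadingCoeff (b d) := by
  have hterm (w : Equiv.Perm (Fin n)) : coeff (d + δ) (b (d.mapDomain w)) =
      if d.mapDomain w = d then MonomialOrder.lex.leadingCoeff (b d) else 0 := by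
    split_ifs with hw
    · rw [hw, MonomialOrder.leadingCoeff, hδ]
    · refine MonomialOrder.coeff_eq_zero_of_lt (m := MonomialOrder.lex) ?_
      rw [hδ, MonomialOrder.lex_lt_iff, toLex_add, toLex_add]
      exact add_lt_add_left ((toLex_mapDomain_le hd w).lt_of_ne (toLex.injective.ne hw)) _
  simp_rw [coeff_sum, hterm, ← Finset.sum_filter, Finset.sum_const]

variable [IsDomain R] [CharZero R] (hb0 : ∀ e, b e ≠ 0)
include hb0

theorem coeff_add_sum_mapDomain_ne_zero {d : Fin n →₀ ℕ} (hd : Antitone d) :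
    coeff (d + δ) (∑ w : Equiv.Perm (Fin n), b (d.mapDomain w)) ≠ 0 := by
  rw [coeff_add_sum_mapDomain hδ hd]
  refine smul_ne_zero (Finset.card_ne_zero.2 ⟨1, ?_⟩)
    (MonomialOrder.leadingCoeff_ne_zero_iff.2 (hb0 d))
  simp

theorem sum_mapDomain_ne_zero {d : Fin n →₀ ℕ} (hd : Antitone d) :
    ∑ w : Equiv.Perm (Fin n), b (d.mapDomain w) ≠ 0 := fun h =>
  coeff_add_sum_mapDomain_ne_zero hδ hb0 hd (by rw [h, coeff_zero])

theorem degree_sum_mapDomain {d : Fin n →₀ ℕ} (hd : Antitone d) :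
    MonomialOrder.lex.degree (∑ w : Equiv.Perm (Fin n), b (d.mapDomain w)) = d + δ := by
  refine degree_eq_of_coeff_ne_zero _ (coeff_add_sum_mapDomain_ne_zero hδ hb0 hd) fun e he => ?_
  rw [coeff_sum] at he
  obtain ⟨w, -, hw⟩ := Finset.exists_ne_zero_of_sum_ne_zero he
  refine (MonomialOrder.lex.le_degree (mem_support_iff.2 hw)).trans ?_
  rw [hδ, MonomialOrder.lex_le_iff, toLex_add, toLex_add]
  exact add_le_add_left (toLex_mapDomain_le hd w) _

end OrbitSum

/-- The symmetrized monomial `∑ w, X ^ (w • d)`: the monomial symmetric function of `d` up to the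
order of the stabilizer of `d`. -/
noncomputable def symmMonomial (R : Type*) [CommRing R] (d : Fin n →₀ ℕ) : MvPolynomial (Fin n) R :=
  ∑ w : Equiv.Perm (Fin n), monomial (d.mapDomain w) 1

section SymmMonomial

variable {R : Type*} [CommRing R]

theorem isSymmetric_symmMonomial (d : Fin n →₀ ℕ) : (symmMonomial R d).IsSymmetric := fun v => by
  simpa only [symmMonomial, one_smul] using
    rename_sum_mapDomain (b := fun e => monomial e (1 : R)) (v := v)
      (c := 1) (fun e => by rw [rename_monomial, one_smul]) d

theorem isHomogeneous_symmMonomial (d : Fin n →₀ ℕ) :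
    (symmMonomial R d).IsHomogeneous d.degree :=
  IsHomogeneous.sum _ _ _ fun w _ => isHomogeneous_monomial _ (Finsupp.degree_mapDomain w d)

theorem exists_mapDomain_of_coeff_symmMonomial_ne_zero {d e : Fin n →₀ ℕ}
    (h : coeff e (symmMonomial R d) ≠ 0) : ∃ w : Equiv.Perm (Fin n), d.mapDomain w = e := by
  classical
  rw [symmMonomial, coeff_sum] at h
  obtain ⟨w, -, hw⟩ := Finset.exists_ne_zero_of_sum_ne_zero h
  rw [coeff_monomial] at hw
  exact ⟨w, of_not_not fun hne => hw (if_neg hne)⟩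

variable [IsDomain R] [CharZero R]

theorem symmMonomial_ne_zero {d : Fin n →₀ ℕ} (hd : Antitone d) : symmMonomial R d ≠ 0 :=
  sum_mapDomain_ne_zero (b := fun e => monomial e (1 : R)) (δ := 0)
    (fun e => by classical simp [MonomialOrder.degree_monomial]) (fun e => by simp) hd

theorem degree_symmMonomial {d : Fin n →₀ ℕ} (hd : Antitone d) :
    MonomialOrder.lex.degree (symmMonomial R d) = d := by
  simpa only [symmMonomial, add_zero] using
    degree_sum_mapDomain (b := fun e => monomial e (1 : R)) (δ := 0)
      (fun e => by classical simp [MonomialOrder.degree_monomial]) (fun e => by simp) hd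

end SymmMonomial

end Symmetric

/-! ### Divisibility by the Vandermonde determinant -/

section Vandermonde

variable {σ R : Type*} [CommRing R]

theorem X_sub_X_dvd_iff [DecidableEq σ] {i j : σ} {p : MvPolynomial σ R} :
    X i - X j ∣ p ↔ rename (Function.update id j i) p = 0 := by
  constructor
  · rintro ⟨s, rfl⟩
    rcases eq_or_ne i j with rfl | hij <;> simp [*]
  · intro h
    suffices X i - X j ∣ p - rename (Function.update id j i) p by
      simpa only [h, sub_zero] using this
    clear h
    induction p using MvPolynomial.induction_on with
    | C a => simp
    | add p q hp hq => simpa only [map_add, add_sub_add_comm] using dvd_add hp hq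
    | mul_X p a hp =>
      rw [map_mul]
      refine dvd_mul_sub_mul hp ?_
      rcases eq_or_ne a j with rfl | ha
      · simp [dvd_sub_comm]
      · simp [ha]

theorem prime_X_sub_X [IsDomain R] {i j : σ} (hij : i ≠ j) :
    Prime (X i - X j : MvPolynomial σ R) := by
  classical
  refine ⟨sub_ne_zero.2 (X_injective.ne hij), fun hunit => ?_, fun p q hpq => ?_⟩
  · simpa using X_sub_X_dvd_iff.1 (hunit.dvd (a := (1 : MvPolynomial σ R)))
  · rwa [X_sub_X_dvd_iff, map_mul, mul_eq_zero, ← X_sub_X_dvd_iff, ← X_sub_X_dvd_iff] at hpq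

theorem X_sub_X_dvd_of_rename_swap [DecidableEq σ] [IsDomain R] [CharZero R] {i j : σ}
    {p : MvPolynomial σ R} (hp : rename (Equiv.swap i j) p = -p) : X i - X j ∣ p := by
  have hswap : Function.update id j i ∘ Equiv.swap i j = Function.update id j i := by
    funext a
    rcases eq_or_ne a i with rfl | hai
    · simp [Function.update_apply]
    · rcases eq_or_ne a j with rfl | haj
      · simp [Function.update_apply]
      · simp [Equiv.swap_apply_of_ne_of_ne hai haj]
  rw [X_sub_X_dvd_iff, ← self_eq_neg]
  conv_lhs => rw [← hswap, ← rename_rename, hp, map_neg]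

variable (R) in
/-- The Vandermonde determinant `∏ i < j, (X j - X i)` in the variables `X 0, …, X (n - 1)`. -/
noncomputable def vandermondeDet (n : ℕ) : MvPolynomial (Fin n) R :=
  (Matrix.vandermonde X).det

theorem vandermondeDet_ne_zero [IsDomain R] (n : ℕ) : vandermondeDet R n ≠ 0 :=
  Matrix.det_vandermonde_ne_zero_iff.2 X_injective

theorem isRelPrime_X_sub_X [IsDomain R] {n : ℕ} {i j a b : Fin n} (hij : i < j) (hab : a < b)
    (hne : (i, j) ≠ (a, b)) : IsRelPrime (X j - X i : MvPolynomial (Fin n) R) (X b - X a) := by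
  rw [(prime_X_sub_X hij.ne').irreducible.isRelPrime_iff_not_dvd, X_sub_X_dvd_iff]
  simp only [map_sub, rename_X, sub_eq_zero, X_injective.eq_iff, Function.update_apply, id_eq]
  grind

theorem vandermondeDet_dvd [IsDomain R] [UniqueFactorizationMonoid R] [CharZero R] {n : ℕ}
    {p : MvPolynomial (Fin n) R}
    (hp : ∀ w : Equiv.Perm (Fin n), rename w p = (w.sign : ℤ) • p) : vandermondeDet R n ∣ p := by
  rw [vandermondeDet, Matrix.det_vandermonde, Finset.prod_sigma']
  refine Finset.prod_dvd_of_isRelPrime ?_ ?_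
  · rintro ⟨i, j⟩ hij ⟨a, b⟩ hab hne
    simp only [Finset.coe_sigma, Set.mem_sigma_iff, Finset.mem_coe, Finset.mem_Ioi] at hij hab
    exact isRelPrime_X_sub_X hij.2 hab.2 (by simpa using hne)
  · rintro ⟨i, j⟩ hij
    simp only [Finset.mem_sigma, Finset.mem_Ioi] at hij
    refine X_sub_X_dvd_of_rename_swap ?_
    simp [hp, Equiv.Perm.sign_swap hij.2.ne']

end Vandermonde

/-! ### Hall–Littlewood polynomials -/

section HallLittlewood

variable {K : Type*} [Field K] {n : ℕ} (τ : K) (d : Fin n →₀ ℕ)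

/-- The linear factor attached to the pair `i, j` in the numerator of a Hall–Littlewood polynomial.
The coefficient `τ` goes to the variable with the smaller exponent, which makes the factor
antisymmetric in `i, j` and equivariant under permutations. -/
noncomputable def hallLittlewoodFactor (i j : Fin n) : MvPolynomial (Fin n) K :=
  C (if d j < d i then τ else 1) * X j - C (if d i < d j then τ else 1) * X i

theorem hallLittlewoodFactor_swap (i j : Fin n) :
    hallLittlewoodFactor τ d i j = -hallLittlewoodFactor τ d j i :=
  (neg_sub _ _).symm

theorem rename_hallLittlewoodFactor (w : Equiv.Perm (Fin n)) (i j : Fin n) :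
    rename w (hallLittlewoodFactor τ d i j) =
      hallLittlewoodFactor τ (d.mapDomain w) (w i) (w j) := by
  simp [hallLittlewoodFactor, Finsupp.mapDomain_apply w.injective]

theorem isHomogeneous_hallLittlewoodFactor (i j : Fin n) :
    (hallLittlewoodFactor τ d i j).IsHomogeneous 1 :=
  (isHomogeneous_C_mul_X _ _).sub (isHomogeneous_C_mul_X _ _)

theorem degree_C_mul_X_sub_C_mul_X {i j : Fin n} (hij : i < j) {a : K} (ha : a ≠ 0) (b : K) :
    MonomialOrder.lex.degree (C b * X j - C a * X i) = Finsupp.single i 1 := by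
  classical
  refine degree_eq_of_coeff_ne_zero _ ?_ fun e he => ?_
  · simpa [coeff_C_mul, coeff_X, Finsupp.single_left_inj, hij.ne'] using ha
  · rw [MonomialOrder.lex_le_iff]
    simp only [coeff_sub, coeff_C_mul, coeff_X] at he
    by_cases hj : Finsupp.single j 1 = e
    · exact hj ▸ Finsupp.Lex.single_le_iff.2 hij.le
    · by_cases hi : Finsupp.single i 1 = e
      · exact hi ▸ le_rfl
      · simp [hi, hj] at he

/-- Up to sign, the numerator of one term of the Hall–Littlewood polynomial
`∑ w, w • (X ^ d * ∏ i < j, (X i - τ X j) / (X i - X j))`, with `τ` replaced by `1` for the pairs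
with `d i = d j`: this trades the normalizing factor of the orbit sum, which vanishes at roots of
unity, for the order of the stabilizer of `d`. -/
noncomputable def hallLittlewoodNumerator : MvPolynomial (Fin n) K :=
  monomial d 1 * ∏ i, ∏ j ∈ Finset.Ioi i, hallLittlewoodFactor τ d i j

theorem hallLittlewoodNumerator_zero :
    hallLittlewoodNumerator τ (0 : Fin n →₀ ℕ) = vandermondeDet K n := by
  simp [hallLittlewoodNumerator, hallLittlewoodFactor, vandermondeDet, Matrix.det_vandermonde]

theorem rename_hallLittlewoodNumerator (w : Equiv.Perm (Fin n)) :
    rename w (hallLittlewoodNumerator τ d) =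
      (w.sign : ℤ) • hallLittlewoodNumerator τ (d.mapDomain w) := by
  simp only [hallLittlewoodNumerator, map_mul, map_prod, rename_monomial,
    rename_hallLittlewoodFactor]
  rw [w.prod_Ioi_comp_eq_sign_mul_prod (hallLittlewoodFactor_swap τ _), zsmul_eq_mul]
  ring

theorem isHomogeneous_hallLittlewoodNumerator :
    (hallLittlewoodNumerator τ d).IsHomogeneous (d.degree + ∑ i : Fin n, ∑ _j ∈ Finset.Ioi i, 1) :=
  (isHomogeneous_monomial _ rfl).mul <| IsHomogeneous.prod _ _ _ fun i _ =>
    IsHomogeneous.prod _ _ _ fun j _ => isHomogeneous_hallLittlewoodFactor τ d i j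

theorem hallLittlewoodFactor_dvd_numerator {i j : Fin n} (hij : i ≠ j) :
    hallLittlewoodFactor τ d i j ∣ hallLittlewoodNumerator τ d := by
  have dvd_of_lt {a b : Fin n} (hab : a < b) :
      hallLittlewoodFactor τ d a b ∣ hallLittlewoodNumerator τ d :=
    ((Finset.dvd_prod_of_mem _ (Finset.mem_Ioi.2 hab)).trans
      (Finset.dvd_prod_of_mem (fun i => ∏ j ∈ Finset.Ioi i, hallLittlewoodFactor τ d i j)
        (Finset.mem_univ a))).mul_left _
  rcases hij.lt_or_gt with h | h
  · exact dvd_of_lt h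
  · rw [hallLittlewoodFactor_swap, neg_dvd]
    exact dvd_of_lt h

section NeZero

variable {τ} (hτ : τ ≠ 0)
include hτ

theorem degree_hallLittlewoodFactor {i j : Fin n} (hij : i < j) :
    MonomialOrder.lex.degree (hallLittlewoodFactor τ d i j) = Finsupp.single i 1 :=
  degree_C_mul_X_sub_C_mul_X hij (by split_ifs <;> simp [hτ]) _

theorem hallLittlewoodFactor_ne_zero {i j : Fin n} (hij : i < j) :
    hallLittlewoodFactor τ d i j ≠ 0 := fun h => by
  have hdeg := degree_hallLittlewoodFactor d hτ hij
  rw [h, MonomialOrder.degree_zero] at hdeg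
  exact Finsupp.single_ne_zero.2 one_ne_zero hdeg.symm

theorem hallLittlewoodNumerator_ne_zero : hallLittlewoodNumerator τ d ≠ 0 :=
  mul_ne_zero (by simp) <| Finset.prod_ne_zero_iff.2 fun i _ =>
    Finset.prod_ne_zero_iff.2 fun j hj => hallLittlewoodFactor_ne_zero d hτ (Finset.mem_Ioi.1 hj)

theorem degree_hallLittlewoodNumerator_eq_add_sum :
    MonomialOrder.lex.degree (hallLittlewoodNumerator τ d) =
      d + ∑ i, ∑ _j ∈ Finset.Ioi i, Finsupp.single i 1 := by
  classical
  have hne := right_ne_zero_of_mul (hallLittlewoodNumerator_ne_zero d hτ)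
  have hne' := Finset.prod_ne_zero_iff.1 hne
  rw [hallLittlewoodNumerator, MonomialOrder.degree_mul (by simp) hne,
    MonomialOrder.degree_monomial, if_neg one_ne_zero, MonomialOrder.degree_prod hne']
  refine congrArg (d + ·) (Finset.sum_congr rfl fun i hi => ?_)
  rw [MonomialOrder.degree_prod (Finset.prod_ne_zero_iff.1 (hne' i hi))]
  exact Finset.sum_congr rfl fun j hj => degree_hallLittlewoodFactor d hτ (Finset.mem_Ioi.1 hj)

theorem degree_hallLittlewoodNumerator :
    MonomialOrder.lex.degree (hallLittlewoodNumerator τ d) =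
      d + MonomialOrder.lex.degree (vandermondeDet K n) := by
  rw [← hallLittlewoodNumerator_zero τ, degree_hallLittlewoodNumerator_eq_add_sum d hτ,
    degree_hallLittlewoodNumerator_eq_add_sum 0 hτ, zero_add]

end NeZero

variable [CharZero K]

theorem vandermondeDet_dvd_sum_hallLittlewoodNumerator :
    vandermondeDet K n ∣
      ∑ w : Equiv.Perm (Fin n), hallLittlewoodNumerator τ (d.mapDomain w) :=
  vandermondeDet_dvd fun w =>
    rename_sum_mapDomain (fun e => rename_hallLittlewoodNumerator τ e w) d

/-- The Hall–Littlewood polynomial with parameter `τ` and exponent `d`, normalized so that it stays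
nonzero at every `τ ≠ 0`. -/
noncomputable def hallLittlewood : MvPolynomial (Fin n) K :=
  (vandermondeDet_dvd_sum_hallLittlewoodNumerator τ d).choose

theorem vandermondeDet_mul_hallLittlewood :
    vandermondeDet K n * hallLittlewood τ d =
      ∑ w : Equiv.Perm (Fin n), hallLittlewoodNumerator τ (d.mapDomain w) :=
  (vandermondeDet_dvd_sum_hallLittlewoodNumerator τ d).choose_spec.symm

theorem isSymmetric_hallLittlewood : (hallLittlewood τ d).IsSymmetric := fun w => by
  have hnum := rename_sum_mapDomain (fun e => rename_hallLittlewoodNumerator τ e w) d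
  have hvan := rename_hallLittlewoodNumerator τ (0 : Fin n →₀ ℕ) w
  rw [Finsupp.mapDomain_zero, hallLittlewoodNumerator_zero] at hvan
  rw [← vandermondeDet_mul_hallLittlewood, map_mul, hvan, smul_mul_assoc] at hnum
  have hsign : (w.sign : ℤ) ≠ 0 := w.sign.ne_zero
  exact mul_left_cancel₀ (vandermondeDet_ne_zero n) (smul_right_injective _ hsign hnum)

theorem isHomogeneous_hallLittlewood : (hallLittlewood τ d).IsHomogeneous d.degree := by
  have hvan := isHomogeneous_hallLittlewoodNumerator τ (0 : Fin n →₀ ℕ)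
  rw [hallLittlewoodNumerator_zero, map_zero, zero_add] at hvan
  refine isHomogeneous_of_mul_left (vandermondeDet_ne_zero n) hvan ?_
  rw [vandermondeDet_mul_hallLittlewood, add_comm]
  refine IsHomogeneous.sum _ _ _ fun w _ => ?_
  simpa only [Finsupp.degree_mapDomain] using
    isHomogeneous_hallLittlewoodNumerator τ (d.mapDomain w)

variable {τ d} (hτ : τ ≠ 0) (hd : Antitone d)
include hτ hd

theorem hallLittlewood_ne_zero : hallLittlewood τ d ≠ 0 := by
  refine right_ne_zero_of_mul (a := vandermondeDet K n) ?_
  rw [vandermondeDet_mul_hallLittlewood]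
  exact sum_mapDomain_ne_zero (fun e => degree_hallLittlewoodNumerator e hτ)
    (fun e => hallLittlewoodNumerator_ne_zero e hτ) hd

theorem degree_hallLittlewood : MonomialOrder.lex.degree (hallLittlewood τ d) = d := by
  have hdeg := degree_sum_mapDomain (fun e => degree_hallLittlewoodNumerator e hτ)
    (fun e => hallLittlewoodNumerator_ne_zero e hτ) hd
  rw [← vandermondeDet_mul_hallLittlewood, MonomialOrder.degree_mul (vandermondeDet_ne_zero n)
    (hallLittlewood_ne_zero hτ hd), add_comm] at hdeg
  exact add_right_cancel hdeg

end HallLittlewood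

section Admissible

variable {n : ℕ} (k : ℕ)

/-- No value is taken more than `k` times by the exponent `d`. -/
def IsAdmissible (d : Fin n →₀ ℕ) : Prop :=
  ∀ i : ℕ, (Finset.univ.filter fun a => d a = i).card ≤ k

variable {k}

theorem isAdmissible_mapDomain {d : Fin n →₀ ℕ} (w : Equiv.Perm (Fin n)) :
    IsAdmissible k (d.mapDomain w) ↔ IsAdmissible k d := by
  refine forall_congr' fun i => ?_
  rw [Finset.card_equiv w.symm (t := Finset.univ.filter fun a => d a = i)]
  simp [Finsupp.mapDomain_equiv_apply]

theorem apply_eq_apply_zero_of_add_one_le {u : Fin (k + 1) → ℕ} (hu : ∀ a, u (a + 1) ≤ u a)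
    (a : Fin (k + 1)) : u a = u 0 := by
  have hsum : ∑ a, u (a + 1) = ∑ a, u a := Equiv.sum_comp (Equiv.addRight (1 : Fin (k + 1))) u
  have hstep (a : Fin (k + 1)) : u (a + 1) = u a :=
    (Finset.sum_eq_sum_iff_of_le fun a _ => hu a).1 hsum a (Finset.mem_univ a)
  induction a using Fin.induction with
  | zero => rfl
  | succ a ih => rw [← Fin.coeSucc_eq_succ, hstep, ih]

end Admissible

/-! ### Restriction to the wheel plane -/

section Wheel

variable {K : Type*} [Field K] {n : ℕ} (k : ℕ) (τ : K)

/-- The factor relating the `j`-th coordinate to its parameter on the wheel plane. -/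
def wheelScale (j : Fin n) : K := if (j : ℕ) ≤ k then τ ^ (j : ℕ) else 1

variable {k τ} in
theorem wheelScale_ne_zero (hτ : τ ≠ 0) (j : Fin n) : wheelScale k τ j ≠ 0 := by
  unfold wheelScale
  split_ifs
  · exact pow_ne_zero _ hτ
  · exact one_ne_zero

variable [NeZero n]

/-- `z` lies on the plane `z j = τ ^ j * z 0` for `j ≤ k`. -/
def IsWheelPoint (z : Fin n → K) : Prop :=
  ∀ j : Fin n, (j : ℕ) ≤ k → z j = τ ^ (j : ℕ) * z 0

/-- The index of the parameter on which the `j`-th coordinate depends on the wheel plane. -/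
def wheelIndex (j : Fin n) : Fin n := if (j : ℕ) ≤ k then 0 else j

/-- The restriction of the `j`-th variable to the wheel plane. -/
noncomputable def wheelVar (j : Fin n) : MvPolynomial (Fin n) K :=
  C (wheelScale k τ j) * X (wheelIndex k j)

/-- Restriction to the wheel plane. Its kernel is prime, so common factors can be cancelled. -/
noncomputable def wheelSubst : MvPolynomial (Fin n) K →ₐ[K] MvPolynomial (Fin n) K :=
  aeval (wheelVar k τ)

variable {k τ}

theorem eval_wheelSubst (z : Fin n → K) (g : MvPolynomial (Fin n) K) :
    eval z (wheelSubst k τ g) = eval (fun j => wheelScale k τ j * z (wheelIndex k j)) g := by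
  simp only [wheelSubst, wheelVar, ← coe_aeval_eq_eval, RingHom.coe_coe, comp_aeval_apply,
    map_mul, aeval_X, aeval_C, Algebra.algebraMap_self_apply]

theorem isWheelPoint_wheelScale_mul (z : Fin n → K) :
    IsWheelPoint k τ fun j => wheelScale k τ j * z (wheelIndex k j) := by
  intro j hj
  simp [wheelScale, wheelIndex, hj]

theorem wheelScale_mul_of_isWheelPoint {z : Fin n → K} (hz : IsWheelPoint k τ z) :
    (fun j => wheelScale k τ j * z (wheelIndex k j)) = z := by
  funext j
  by_cases hj : (j : ℕ) ≤ k
  · simp [wheelScale, wheelIndex, hj, hz j hj]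
  · simp [wheelScale, wheelIndex, hj]

theorem wheelSubst_eq_zero_iff [Infinite K] {g : MvPolynomial (Fin n) K} :
    wheelSubst k τ g = 0 ↔ ∀ z : Fin n → K, IsWheelPoint k τ z → eval z g = 0 := by
  constructor
  · intro h z hz
    rw [← wheelScale_mul_of_isWheelPoint hz, ← eval_wheelSubst, h, map_zero]
  · intro h
    refine MvPolynomial.funext fun z => ?_
    rw [eval_wheelSubst, map_zero, h _ (isWheelPoint_wheelScale_mul z)]

theorem wheelSubst_expand (p : ℕ) (g : MvPolynomial (Fin n) K) :
    wheelSubst k τ (expand p g) = expand p (wheelSubst k (τ ^ p) g) := by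
  have hscale (j : Fin n) : wheelScale k (τ ^ p) j = wheelScale k τ j ^ p := by
    unfold wheelScale
    split_ifs
    · rw [← pow_mul, ← pow_mul, mul_comm]
    · rw [one_pow]
  have hvar : (wheelVar k τ : Fin n → MvPolynomial (Fin n) K) ^ p =
      fun j => expand p (wheelVar k (τ ^ p) j) := by
    funext j
    simp [wheelVar, mul_pow, hscale]
  simp only [wheelSubst, aeval_expand, comp_aeval_apply, hvar]

theorem wheelSubst_monomial (d : Fin n →₀ ℕ) (a : K) :
    wheelSubst k τ (monomial d a) =
      monomial (d.mapDomain (wheelIndex k)) (a * ∏ j, wheelScale k τ j ^ d j) := by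
  have hX : ∏ j, (X (wheelIndex k j) : MvPolynomial (Fin n) K) ^ d j =
      monomial (d.mapDomain (wheelIndex k)) 1 := by
    rw [← rename_monomial, monomial_eq, Finsupp.prod_fintype _ _ (by simp)]
    simp
  rw [wheelSubst, aeval_monomial, Finsupp.prod_fintype _ _ (by simp)]
  simp only [wheelVar, mul_pow, Finset.prod_mul_distrib, hX, ← C_pow, ← map_prod, algebraMap_eq,
    C_mul_monomial, mul_one]

theorem wheelVar_ne_zero (hτ : τ ≠ 0) (j : Fin n) : wheelVar k τ j ≠ 0 :=
  mul_ne_zero (C_ne_zero.2 (wheelScale_ne_zero hτ j)) (X_ne_zero _)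

section PrimitiveRoot

variable (hτ : IsPrimitiveRoot τ (k + 1))
include hτ

theorem wheelVar_injective :
    Function.Injective (wheelVar k τ : Fin n → MvPolynomial (Fin n) K) := by
  intro i j hij
  simp only [wheelVar, C_mul_X_eq_monomial, monomial_eq_monomial_iff,
    Finsupp.single_left_inj one_ne_zero, wheelScale_ne_zero (hτ.ne_zero k.succ_ne_zero),
    false_and, or_false] at hij
  obtain ⟨hindex, hscale⟩ := hij
  unfold wheelIndex at hindex
  unfold wheelScale at hscale
  split_ifs at hindex hscale with hi hj hj
  · exact Fin.ext (hτ.pow_inj (Nat.lt_succ_of_le hi) (Nat.lt_succ_of_le hj) hscale)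
  · simp [← hindex] at hj
  · simp [hindex] at hi
  · exact hindex

theorem wheelSubst_vandermondeDet_ne_zero : wheelSubst k τ (vandermondeDet K n) ≠ 0 := by
  have hdet : wheelSubst k τ (vandermondeDet K n) = (Matrix.vandermonde (wheelVar k τ)).det := by
    simp [vandermondeDet, Matrix.det_vandermonde, wheelSubst]
  rw [hdet, Matrix.det_vandermonde_ne_zero_iff]
  exact wheelVar_injective hτ

theorem wheelVar_castLE_add_one (hn : k < n) (a : Fin (k + 1)) :
    wheelVar k τ (Fin.castLE hn (a + 1)) = C τ * wheelVar k τ (Fin.castLE hn a) := by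
  have hpow : τ ^ ((a + 1 : Fin (k + 1)) : ℕ) = τ * τ ^ (a : ℕ) := by
    rw [← pow_succ', Fin.val_add, Fin.val_one', Nat.add_mod_mod, ← pow_eq_pow_mod _ hτ.pow_eq_one]
  simp [wheelVar, wheelScale, wheelIndex, Fin.is_le, hpow, mul_assoc]

end PrimitiveRoot

theorem wheelSubst_hallLittlewoodNumerator (hτ : IsPrimitiveRoot τ (k + 1)) (hn : k < n)
    {d : Fin n →₀ ℕ} (hd : IsAdmissible k d) :
    wheelSubst k τ (hallLittlewoodNumerator τ d) = 0 := by
  by_contra hne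
  have hle (a : Fin (k + 1)) : d (Fin.castLE hn (a + 1)) ≤ d (Fin.castLE hn a) := by
    by_contra! hlt
    refine hne (zero_dvd_iff.1 ?_)
    convert map_dvd (wheelSubst k τ)
      (hallLittlewoodFactor_dvd_numerator τ d (ne_of_apply_ne d hlt.ne)) using 1
    simp [hallLittlewoodFactor, hlt, hlt.not_gt, wheelSubst, wheelVar_castLE_add_one hτ hn]
  have hconst := apply_eq_apply_zero_of_add_one_le (u := fun a => d (Fin.castLE hn a)) hle
  have hcard : (Finset.univ.map (Fin.castLEEmb hn)).card ≤ k :=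
    (Finset.card_le_card fun j hj => ?_).trans (hd (d (Fin.castLE hn 0)))
  · simp at hcard
  · obtain ⟨a, -, rfl⟩ := Finset.mem_map.1 hj
    exact Finset.mem_filter.2 ⟨Finset.mem_univ _, hconst a⟩

theorem wheelSubst_hallLittlewood [CharZero K] (hτ : IsPrimitiveRoot τ (k + 1)) (hn : k < n)
    {d : Fin n →₀ ℕ} (hd : IsAdmissible k d) : wheelSubst k τ (hallLittlewood τ d) = 0 := by
  refine (mul_eq_zero.1 ?_).resolve_left (wheelSubst_vandermondeDet_ne_zero hτ)
  rw [← map_mul, vandermondeDet_mul_hallLittlewood, map_sum]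
  exact Finset.sum_eq_zero fun w _ =>
    wheelSubst_hallLittlewoodNumerator hτ hn ((isAdmissible_mapDomain w).2 hd)

end Wheel

/-! ### Symmetric polynomials vanishing on the wheel plane -/

section WheelSubmodule

theorem eq_of_mapDomain_eq_of_sum_sq_le {σ υ : Type*} [Fintype σ] {φ : σ → υ} {b d : σ →₀ ℕ}
    (hb : ∀ i j, φ i = φ j → b i = b j) (hφ : d.mapDomain φ = b.mapDomain φ)
    (hle : ∑ j, d j ^ 2 ≤ ∑ j, b j ^ 2) : d = b := by
  obtain ⟨c, hc⟩ : ∃ c : υ → ℕ, ∀ j, c (φ j) = b j :=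
    ⟨Function.extend φ b 0, Function.FactorsThrough.extend_apply (fun i j => hb i j) 0⟩
  have hpair : ∑ j, d j * b j = ∑ j, b j ^ 2 := by
    have h := congrArg (Finsupp.linearCombination ℕ c) hφ
    rw [Finsupp.linearCombination_mapDomain, Finsupp.linearCombination_mapDomain] at h
    simpa [Finsupp.linearCombination_apply, Finsupp.sum_fintype, hc, sq] using h
  have hdist : ∑ j, ((d j : ℤ) - b j) ^ 2 ≤ 0 := by
    have hexpand : ∑ j, ((d j : ℤ) - b j) ^ 2 =
        ∑ j, (d j : ℤ) ^ 2 - 2 * ∑ j, (d j * b j : ℤ) + ∑ j, (b j : ℤ) ^ 2 := by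
      rw [Finset.mul_sum, ← Finset.sum_sub_distrib, ← Finset.sum_add_distrib]
      exact Finset.sum_congr rfl fun j _ => by ring
    zify at hle hpair
    linarith
  ext j
  have hj := (Finset.sum_eq_zero_iff_of_nonneg fun j _ => sq_nonneg ((d j : ℤ) - b j)).1
    (hdist.antisymm (Finset.sum_nonneg fun j _ => sq_nonneg _)) j (Finset.mem_univ j)
  exact_mod_cast sub_eq_zero.1 (pow_eq_zero_iff two_ne_zero |>.1 hj)

theorem exists_mapDomain_eq_of_not_isAdmissible {n k : ℕ} (hn : k < n) {d : Fin n →₀ ℕ}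
    (hd : ¬ IsAdmissible k d) :
    ∃ (w : Equiv.Perm (Fin n)) (a : ℕ), ∀ j : Fin n, (j : ℕ) ≤ k → d.mapDomain w j = a := by
  classical
  unfold IsAdmissible at hd
  push Not at hd
  obtain ⟨a, ha⟩ := hd
  obtain ⟨s, hs, hcard⟩ := Finset.exists_subset_card_eq (Nat.succ_le_of_lt ha)
  have hiic : (Finset.univ.filter fun j : Fin n => (j : ℕ) ≤ k) = Finset.Iic ⟨k, hn⟩ := by
    ext j; simp [Fin.le_def]
  have heq : Fintype.card {j : Fin n // (j : ℕ) ≤ k} = Fintype.card {j : Fin n // j ∈ s} := by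
    rw [Fintype.card_coe, hcard, Fintype.card_subtype, hiic, Fin.card_Iic]
  let e := Fintype.equivOfCardEq heq
  refine ⟨e.extendSubtype.symm, a, fun j hj => ?_⟩
  rw [Finsupp.mapDomain_equiv_apply, Equiv.symm_symm]
  exact (Finset.mem_filter.1 (hs (e.extendSubtype_mem j hj))).2

variable {K : Type*} [Field K] {n : ℕ}

theorem symmetricSubalgebra_le_span_hallLittlewood_sup [CharZero K] {k : ℕ} {τ : K} (hτ : τ ≠ 0) :
    (symmetricSubalgebra (Fin n) K).toSubmodule ≤
      Submodule.span K ((fun d => hallLittlewood τ d) '' {d | Antitone d ∧ IsAdmissible k d}) ⊔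
        restrictSupport K {d | ¬ IsAdmissible k d} := by
  refine le_of_forall_exists_degree_eq MonomialOrder.lex fun f hf _ => ?_
  have hanti := antitone_degree_of_isSymmetric hf
  by_cases hadm : IsAdmissible k (MonomialOrder.lex.degree f)
  · exact ⟨_, ⟨isSymmetric_hallLittlewood τ _, Submodule.mem_sup_left
      (Submodule.subset_span ⟨_, ⟨hanti, hadm⟩, rfl⟩)⟩, hallLittlewood_ne_zero hτ hanti,
      degree_hallLittlewood hτ hanti⟩
  · refine ⟨_, ⟨isSymmetric_symmMonomial _, Submodule.mem_sup_right ?_⟩,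
      symmMonomial_ne_zero hanti, degree_symmMonomial hanti⟩
    rw [mem_restrictSupport_iff]
    intro e he
    obtain ⟨w, rfl⟩ := exists_mapDomain_of_coeff_symmMonomial_ne_zero (mem_support_iff.1 he)
    exact (isAdmissible_mapDomain w).not.2 hadm

variable [NeZero n] (k : ℕ) (τ : K)

theorem coeff_mapDomain_wheelSubst {b : Fin n →₀ ℕ} {g : MvPolynomial (Fin n) K}
    (hb : ∀ i j : Fin n, wheelIndex k i = wheelIndex k j → b i = b j)
    (hmax : ∀ d ∈ g.support, ∑ j, d j ^ 2 ≤ ∑ j, b j ^ 2) :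
    coeff (b.mapDomain (wheelIndex k)) (wheelSubst k τ g) =
      coeff b g * ∏ j, wheelScale k τ j ^ b j := by
  classical
  conv_lhs => rw [g.as_sum, map_sum, coeff_sum]
  simp only [wheelSubst_monomial, coeff_monomial]
  rw [Finset.sum_eq_single b]
  · exact if_pos rfl
  · intro d hd hdb
    exact if_neg fun h => hdb (eq_of_mapDomain_eq_of_sum_sq_le hb h (hmax d hd))
  · intro hb
    simp [notMem_support_iff.1 hb]

/-- The space of symmetric polynomials vanishing on the wheel plane `x j = τ ^ j * x 0`, `j ≤ k`. -/
noncomputable def wheelSubmodule : Submodule K (MvPolynomial (Fin n) K) :=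
  (symmetricSubalgebra (Fin n) K).toSubmodule ⊓ LinearMap.ker (wheelSubst k τ).toLinearMap

variable {k τ}

theorem mem_wheelSubmodule {g : MvPolynomial (Fin n) K} :
    g ∈ wheelSubmodule k τ ↔ g.IsSymmetric ∧ wheelSubst k τ g = 0 := Iff.rfl

theorem disjoint_wheelSubmodule_restrictSupport (hτ : τ ≠ 0) (hn : k < n) :
    Disjoint (wheelSubmodule k τ) (restrictSupport K {d : Fin n →₀ ℕ | ¬ IsAdmissible k d}) := by
  refine Submodule.disjoint_def.2 fun g hg hsupp => ?_
  rw [mem_restrictSupport_iff] at hsupp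
  obtain ⟨hsymm, hker⟩ := mem_wheelSubmodule.1 hg
  by_contra hg0
  obtain ⟨b₀, hb₀, hmax⟩ := g.support.exists_max_image (fun d => ∑ j, d j ^ 2)
    (support_nonempty.2 hg0)
  obtain ⟨w, a, hw⟩ := exists_mapDomain_eq_of_not_isAdmissible hn (hsupp hb₀)
  have hsq : ∑ j, b₀.mapDomain w j ^ 2 = ∑ j, b₀ j ^ 2 := by
    simpa only [Finsupp.mapDomain_equiv_apply] using Equiv.sum_comp w.symm fun j => b₀ j ^ 2
  have hconst (i j : Fin n) (hij : wheelIndex k i = wheelIndex k j) :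
      b₀.mapDomain w i = b₀.mapDomain w j := by
    unfold wheelIndex at hij
    split_ifs at hij with hi hj hj
    · rw [hw i hi, hw j hj]
    · simp [← hij] at hj
    · simp [hij] at hi
    · rw [hij]
  have hcoeff := coeff_mapDomain_wheelSubst k τ hconst fun d hd => (hmax d hd).trans_eq hsq.symm
  rw [hker, coeff_zero, coeff_mapDomain_of_isSymmetric hsymm] at hcoeff
  exact mul_ne_zero (mem_support_iff.1 hb₀)
    (Finset.prod_ne_zero_iff.2 fun j _ => pow_ne_zero _ (wheelScale_ne_zero hτ j)) hcoeff.symm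

theorem wheelSubmodule_eq_span_hallLittlewood [CharZero K]
    (hτ : IsPrimitiveRoot τ (k + 1)) (hn : k < n) :
    wheelSubmodule k τ =
      Submodule.span K ((fun d : Fin n →₀ ℕ => hallLittlewood τ d) ''
        {d | Antitone d ∧ IsAdmissible k d}) := by
  have hτ0 := hτ.ne_zero k.succ_ne_zero
  have hle : Submodule.span K ((fun d : Fin n →₀ ℕ => hallLittlewood τ d) ''
        {d | Antitone d ∧ IsAdmissible k d})
      ≤ wheelSubmodule k τ := by
    refine Submodule.span_le.2 ?_
    rintro _ ⟨d, hd, rfl⟩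
    exact ⟨isSymmetric_hallLittlewood τ d, wheelSubst_hallLittlewood hτ hn hd.2⟩
  refine le_antisymm (fun f hf => ?_) hle
  obtain ⟨g, hg, h, hh, rfl⟩ :=
    Submodule.mem_sup.1 (symmetricSubalgebra_le_span_hallLittlewood_sup hτ0 hf.1)
  have hh0 : h = 0 := Submodule.disjoint_def.1 (disjoint_wheelSubmodule_restrictSupport hτ0 hn) h
    (((wheelSubmodule k τ).add_mem_iff_right (hle hg)).1 hf) hh
  rwa [hh0, add_zero]

end WheelSubmodule

/-! ### Slim partitions -/

section Slim

variable {n : ℕ}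

/-- The part following `v i`, read as `0` after the last one. -/
def nextPart (v : Fin n → ℕ) (i : Fin n) : ℕ :=
  if h : (i : ℕ) + 1 < n then v ⟨i + 1, h⟩ else 0

/-- The difference of consecutive parts of a partition, the last part counting as a difference.
A partition `v` is `(r - 1)`-slim exactly when all its gaps are less than `r - 1`. -/
def gap (v : Fin n → ℕ) (i : Fin n) : ℕ :=
  v i - nextPart v i

/-- The partition with prescribed gaps `g`. -/
def ofGaps (g : Fin n → ℕ) (i : Fin n) : ℕ :=
  ∑ j ∈ Finset.Ici i, g j

theorem isSlim_iff_gap_lt {r : ℕ} {v : Fin n → ℕ} : IsSlim r n v ↔ ∀ i, gap v i < r - 1 := by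
  unfold gap nextPart
  constructor
  · intro hv i
    split_ifs with hi
    · exact hv.1 i hi
    · exact hv.2 i (by omega)
  · intro hv
    refine ⟨fun i hi => by simpa [hi] using hv i, fun i hi => ?_⟩
    simpa [show ¬ (i : ℕ) + 1 < n by omega] using hv i

theorem nextPart_le {v : Fin n → ℕ} (hv : Antitone v) (i : Fin n) : nextPart v i ≤ v i := by
  unfold nextPart
  split_ifs
  · exact hv (Fin.le_def.2 (Nat.le_succ _))
  · exact Nat.zero_le _

theorem gap_add_nextPart {v : Fin n → ℕ} (hv : Antitone v) (i : Fin n) :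
    gap v i + nextPart v i = v i :=
  Nat.sub_add_cancel (nextPart_le hv i)

theorem gap_smul_add {v w : Fin n → ℕ} (hv : Antitone v) (hw : Antitone w) (R : ℕ) (i : Fin n) :
    gap (R • v + w) i = R * gap v i + gap w i := by
  have hnext : nextPart (R • v + w) i = R * nextPart v i + nextPart w i := by
    unfold nextPart
    split_ifs <;> simp
  rw [gap, hnext, Pi.add_apply, Pi.smul_apply, smul_eq_mul, ← gap_add_nextPart hv,
    ← gap_add_nextPart hw, mul_add]
  omega

theorem antitone_ofGaps (g : Fin n → ℕ) : Antitone (ofGaps g) := fun _ _ hij =>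
  Finset.sum_le_sum_of_subset (Finset.Ici_subset_Ici.2 hij)

theorem ofGaps_smul_add (R : ℕ) (g h : Fin n → ℕ) :
    ofGaps (R • g + h) = R • ofGaps g + ofGaps h := by
  ext i
  simp [ofGaps, Finset.sum_add_distrib, Finset.mul_sum]

theorem ofGaps_eq_add_nextPart (g : Fin n → ℕ) (i : Fin n) :
    ofGaps g i = g i + nextPart (ofGaps g) i := by
  have hnext : nextPart (ofGaps g) i = ∑ j ∈ Finset.Ioi i, g j := by
    unfold nextPart ofGaps
    split_ifs with hi
    · exact Finset.sum_congr (by ext j; rw [Finset.mem_Ici, Finset.mem_Ioi]; rfl) fun _ _ => rfl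
    · refine (Finset.sum_eq_zero fun j hj => absurd (Finset.mem_Ioi.1 hj) ?_).symm
      rw [Fin.lt_def]
      omega
  rw [hnext, ofGaps, ← Finset.Ioi_insert, Finset.sum_insert (by simp)]

theorem gap_ofGaps (g : Fin n → ℕ) : gap (ofGaps g) = g :=
  funext fun i => by rw [gap, ofGaps_eq_add_nextPart, Nat.add_sub_cancel]

theorem ofGaps_gap {v : Fin n → ℕ} (hv : Antitone v) : ofGaps (gap v) = v := by
  funext i
  induction i using WellFoundedGT.induction with
  | ind i ih =>
    have hnext : nextPart (ofGaps (gap v)) i = nextPart v i := by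
      unfold nextPart
      split_ifs with hi
      · exact ih _ (Fin.lt_def.2 (Nat.lt_succ_self _))
      · rfl
    rw [ofGaps_eq_add_nextPart, hnext, gap_add_nextPart hv]

theorem gap_injOn_antitone : Set.InjOn gap {v : Fin n → ℕ | Antitone v} := fun v hv w hw h => by
  rw [← ofGaps_gap hv, h, ofGaps_gap hw]

theorem exists_smul_add_isSlim {r : ℕ} (hr : 2 ≤ r) {v : Fin n → ℕ} (hv : Antitone v) :
    ∃ l a : Fin n → ℕ, Antitone l ∧ Antitone a ∧ IsSlim r n a ∧ v = (r - 1) • l + a := by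
  refine ⟨ofGaps fun i => gap v i / (r - 1), ofGaps fun i => gap v i % (r - 1),
    antitone_ofGaps _, antitone_ofGaps _, isSlim_iff_gap_lt.2 fun i => ?_, ?_⟩
  · rw [gap_ofGaps]
    exact Nat.mod_lt _ (by omega)
  · rw [← ofGaps_smul_add]
    conv_lhs => rw [← ofGaps_gap hv]
    congr 1
    ext i
    exact (Nat.div_add_mod _ _).symm

theorem eq_and_eq_of_smul_add_eq {r : ℕ} {l l' a a' : Fin n → ℕ}
    (hl : Antitone l) (hl' : Antitone l') (ha : Antitone a) (ha' : Antitone a')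
    (hslim : IsSlim r n a) (hslim' : IsSlim r n a')
    (h : (r - 1) • l + a = (r - 1) • l' + a') : l = l' ∧ a = a' := by
  rw [isSlim_iff_gap_lt] at hslim hslim'
  have hgap (i : Fin n) : (r - 1) * gap l i + gap a i = (r - 1) * gap l' i + gap a' i := by
    rw [← gap_smul_add hl ha, h, gap_smul_add hl' ha']
  refine ⟨gap_injOn_antitone hl hl' (funext fun i => ?_),
    gap_injOn_antitone ha ha' (funext fun i => ?_)⟩
  · have hi := congrArg (· / (r - 1)) (hgap i)
    have hpos : 0 < r - 1 := (Nat.zero_le _).trans_lt (hslim i)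
    simpa [Nat.mul_add_div hpos, Nat.div_eq_of_lt (hslim i), Nat.div_eq_of_lt (hslim' i)] using hi
  · have hi := congrArg (· % (r - 1)) (hgap i)
    simpa [Nat.mod_eq_of_lt (hslim i), Nat.mod_eq_of_lt (hslim' i)] using hi

end Slim

/-! ### Symmetric polynomials over the `(r - 1)`-th powers of the variables -/

section Freeness

/-- The `(r - 1)`-slim partitions with at most `n` parts. -/
abbrev SlimPartition (r n : ℕ) : Type :=
  {a : Fin n →₀ ℕ // Antitone a ∧ IsSlim r n a}

theorem exists_injective_slimPartition (r n : ℕ) :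
    ∃ e : SlimPartition r n → Fin n → Fin (r - 1), Function.Injective e :=
  ⟨fun a i => ⟨gap a.1 i, isSlim_iff_gap_lt.1 a.2.2 i⟩, fun a b h =>
    Subtype.ext <| DFunLike.coe_injective <| gap_injOn_antitone a.2.1 b.2.1 <|
      funext fun i => congrArg Fin.val (congrFun h i)⟩

noncomputable instance (r n : ℕ) : Fintype (SlimPartition r n) :=
  haveI := Finite.of_injective _ (exists_injective_slimPartition r n).choose_spec
  Fintype.ofFinite _

theorem card_slimPartition_le (r n : ℕ) :
    Fintype.card (SlimPartition r n) ≤ Fintype.card (Fin n → Fin (r - 1)) :=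
  Fintype.card_le_of_injective _ (exists_injective_slimPartition r n).choose_spec

variable {K : Type*} [Field K] {n : ℕ}

/-- The linear map `g ↦ g(x ^ R) * m_a`, where `m_a` is the symmetric polynomial `symmMonomial`. -/
noncomputable def expandMul (R : ℕ) (a : Fin n →₀ ℕ) :
    MvPolynomial (Fin n) K →ₗ[K] MvPolynomial (Fin n) K :=
  LinearMap.mulRight K (symmMonomial K a) ∘ₗ (expand R).toLinearMap

theorem expandMul_apply (R : ℕ) (a : Fin n →₀ ℕ) (g : MvPolynomial (Fin n) K) :
    expandMul R a g = expand R g * symmMonomial K a := rfl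

theorem isSymmetric_expandMul (R : ℕ) (a : Fin n →₀ ℕ) {g : MvPolynomial (Fin n) K}
    (hg : g.IsSymmetric) : (expandMul R a g).IsSymmetric :=
  (isSymmetric_expand hg R).mul (isSymmetric_symmMonomial a)

section CharZero

variable [CharZero K]

theorem expandMul_ne_zero {R : ℕ} (hR : R ≠ 0) {a : Fin n →₀ ℕ} (ha : Antitone a)
    {g : MvPolynomial (Fin n) K} (hg : g ≠ 0) : expandMul R a g ≠ 0 :=
  mul_ne_zero ((map_ne_zero_iff _ (expand_injective (Nat.pos_of_ne_zero hR))).2 hg)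
    (symmMonomial_ne_zero ha)

theorem degree_expandMul {R : ℕ} (hR : R ≠ 0) {a : Fin n →₀ ℕ} (ha : Antitone a)
    {g : MvPolynomial (Fin n) K} (hg : g ≠ 0) :
    MonomialOrder.lex.degree (expandMul R a g) = R • MonomialOrder.lex.degree g + a := by
  rw [expandMul_apply, MonomialOrder.degree_mul
    ((map_ne_zero_iff _ (expand_injective (Nat.pos_of_ne_zero hR))).2 hg) (symmMonomial_ne_zero ha),
    degree_expand _ hR, degree_symmMonomial ha]

theorem exists_eq_sum_expandMul {r : ℕ} (hr : 2 ≤ r) {f : MvPolynomial (Fin n) K}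
    (hf : f.IsSymmetric) :
    ∃ g : SlimPartition r n → MvPolynomial (Fin n) K,
      (∀ a, (g a).IsSymmetric) ∧ f = ∑ a, expandMul (r - 1) a.1 (g a) := by
  have hle : (symmetricSubalgebra (Fin n) K).toSubmodule ≤ ⨆ a : SlimPartition r n,
      (symmetricSubalgebra (Fin n) K).toSubmodule.map (expandMul (r - 1) a.1) := by
    refine le_of_forall_exists_degree_eq MonomialOrder.lex fun f hf _ => ?_
    obtain ⟨l, a, hl, ha, hslim, hdeg⟩ :=
      exists_smul_add_isSlim hr (antitone_degree_of_isSymmetric hf)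
    let l' := Finsupp.equivFunOnFinite.symm l
    let a' : SlimPartition r n := ⟨Finsupp.equivFunOnFinite.symm a, ha, hslim⟩
    have hl0 : symmMonomial K l' ≠ 0 := symmMonomial_ne_zero hl
    have hsymm := isSymmetric_symmMonomial (R := K) l'
    refine ⟨expandMul (r - 1) a'.1 (symmMonomial K l'), ⟨isSymmetric_expandMul _ _ hsymm,
      Submodule.mem_iSup_of_mem a' (Submodule.mem_map_of_mem hsymm)⟩,
      expandMul_ne_zero (by omega) ha hl0, ?_⟩
    rw [degree_expandMul (by omega) ha hl0, degree_symmMonomial hl]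
    exact DFunLike.coe_injective hdeg.symm
  obtain ⟨h, hh, rfl⟩ := (Submodule.mem_iSup_iff_exists_finsupp _ _).1 (hle hf)
  choose g hg hgh using hh
  exact ⟨g, hg, by simp [Finsupp.sum_fintype, hgh]⟩

end CharZero

theorem exists_isSymmetric_eval_eq_single {σ ι : Type*} [Fintype σ] [Finite ι] [DecidableEq ι]
    {y : σ → ι → K} (hy : Function.Injective fun p : σ × ι => y p.1 p.2) (s₀ : σ → ι) :
    ∃ H : MvPolynomial σ K, H.IsSymmetric ∧
      ∀ s : σ → ι, eval (fun j => y j (s j)) H = if s = s₀ then 1 else 0 := by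
  have := Fintype.ofFinite ι
  let H : MvPolynomial σ K :=
    ∏ i, ∏ a ∈ Finset.univ.erase (s₀ i), ∏ j, (C (y i a) - X j)
  have heval (s : σ → ι) : eval (fun j => y j (s j)) H =
      ∏ i, ∏ a ∈ Finset.univ.erase (s₀ i), ∏ j, (y i a - y j (s j)) := by
    simp only [H, map_prod, map_sub, eval_C, eval_X]
  have hsymm : H.IsSymmetric := fun w => by
    simp only [H, map_prod, map_sub, rename_C, rename_X]
    exact Finset.prod_congr rfl fun i _ => Finset.prod_congr rfl fun a _ =>
      Equiv.prod_comp w fun j => (C (y i a) - X j : MvPolynomial σ K)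
  have hne : eval (fun j => y j (s₀ j)) H ≠ 0 := by
    simp only [heval, Finset.prod_ne_zero_iff, sub_ne_zero]
    intro i _ a ha j _ heq
    obtain ⟨rfl, rfl⟩ := Prod.mk.inj (hy (a₁ := (i, a)) (a₂ := (j, s₀ j)) heq)
    exact Finset.notMem_erase _ _ ha
  refine ⟨C (eval (fun j => y j (s₀ j)) H)⁻¹ * H, (IsSymmetric.C _).mul hsymm, fun s => ?_⟩
  rw [map_mul, eval_C]
  split_ifs with hs
  · rw [hs, inv_mul_cancel₀ hne]
  · obtain ⟨i, hi⟩ := Function.ne_iff.1 hs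
    rw [heval s, Finset.prod_eq_zero (Finset.mem_univ i) (Finset.prod_eq_zero
      (Finset.mem_erase.2 ⟨hi, Finset.mem_univ (s i)⟩)
      (Finset.prod_eq_zero (Finset.mem_univ i) (sub_self _))), mul_zero]

theorem pow_rootOfUnity_mul {R : ℕ} {q : K} (hq : q ^ R = 1) (s : Fin n → ℕ) (x : Fin n → K) :
    (fun j => q ^ s j * x j) ^ R = x ^ R := by
  funext j
  rw [Pi.pow_apply, mul_pow, pow_right_comm, hq, one_pow, one_mul, Pi.pow_apply]

theorem injective_rootOfUnity_mul {R : ℕ} {q : K} (hq : IsPrimitiveRoot q R) {x : Fin n → K}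
    (hx0 : ∀ j, x j ≠ 0) (hx : Function.Injective (x ^ R)) :
    Function.Injective fun p : Fin n × Fin R => q ^ (p.2 : ℕ) * x p.1 := by
  rintro ⟨i, a⟩ ⟨j, b⟩ (h : q ^ (a : ℕ) * x i = q ^ (b : ℕ) * x j)
  have hij : i = j := hx <| by
    have hpow := congrArg (· ^ R) h
    simpa only [Pi.pow_apply, mul_pow, pow_right_comm q _ R, hq.pow_eq_one, one_pow, one_mul]
      using hpow
  subst hij
  exact Prod.ext rfl (Fin.ext (hq.pow_inj a.2 b.2 (mul_right_cancel₀ (hx0 i) h)))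

variable [CharZero K]

/- The values of symmetric polynomials at the `(r - 1) ^ n` points `(q ^ s j * x j)ⱼ` are arbitrary
and are spanned by the values of the slim `symmMonomial`s, of which there are at most
`(r - 1) ^ n`. -/
theorem linearIndependent_eval_symmMonomial {r : ℕ} (hr : 2 ≤ r) {q : K}
    (hq : IsPrimitiveRoot q (r - 1)) {x : Fin n → K} (hx0 : ∀ j, x j ≠ 0)
    (hx : Function.Injective (x ^ (r - 1))) :
    LinearIndependent K fun (a : SlimPartition r n) (s : Fin n → Fin (r - 1)) =>
      eval (fun j => q ^ (s j : ℕ) * x j) (symmMonomial K a.1) := by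
  set v := fun (a : SlimPartition r n) (s : Fin n → Fin (r - 1)) =>
    eval (fun j => q ^ (s j : ℕ) * x j) (symmMonomial K a.1)
  have hspan : Submodule.span K (Set.range v) = ⊤ := by
    rw [eq_top_iff, ← (Pi.basisFun K _).span_eq, Submodule.span_le]
    rintro _ ⟨s₀, rfl⟩
    obtain ⟨H, hH, heval⟩ :=
      exists_isSymmetric_eval_eq_single (y := fun j (a : Fin (r - 1)) => q ^ (a : ℕ) * x j)
        (injective_rootOfUnity_mul hq hx0 hx) s₀
    obtain ⟨g, -, rfl⟩ := exists_eq_sum_expandMul hr hH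
    have hsum : Pi.basisFun K _ s₀ = ∑ a, eval (x ^ (r - 1)) (g a) • v a := by
      funext s
      have hs := heval s
      simp only [map_sum, expandMul_apply, map_mul, eval_expand,
        pow_rootOfUnity_mul hq.pow_eq_one] at hs
      simp [v, hs, Pi.single_apply]
    rw [hsum]
    exact Submodule.sum_mem _ fun a _ =>
      Submodule.smul_mem _ _ (Submodule.subset_span (Set.mem_range_self a))
  rw [linearIndependent_iff_card_le_finrank_span, Set.finrank, hspan, finrank_top,
    Module.finrank_fintype_fun_eq_card]
  exact card_slimPartition_le r n

end Freeness

/-! ### The space of symmetric polynomials with the wheel condition -/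

section Basis

variable {K : Type*} [Field K] [CharZero K] {n k r : ℕ}

/-- The admissible partitions with at most `n` parts. -/
abbrev AdmissiblePartition (k n : ℕ) : Type :=
  {d : Fin n →₀ ℕ // Antitone d ∧ IsAdmissible k d}

/-- The element `P_λ(x ^ (r - 1); τ) * m_μ` of the basis of `F_n^{(k,r)}` indexed by the
admissible partitions `λ` and the slim partitions `μ`. -/
noncomputable def powWheelBasis (τ : K) (p : AdmissiblePartition k n × SlimPartition r n) :
    MvPolynomial (Fin n) K :=
  expandMul (r - 1) p.2.1 (hallLittlewood τ p.1.1)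

theorem isHomogeneous_powWheelBasis (τ : K) (p : AdmissiblePartition k n × SlimPartition r n) :
    (powWheelBasis τ p).IsHomogeneous ((r - 1) * p.1.1.degree + p.2.1.degree) :=
  (isHomogeneous_expand (isHomogeneous_hallLittlewood τ _) _).mul (isHomogeneous_symmMonomial _)

theorem linearIndependent_powWheelBasis (hr : 2 ≤ r) {τ : K} (hτ : τ ≠ 0) :
    LinearIndependent K
      (powWheelBasis τ : AdmissiblePartition k n × SlimPartition r n → MvPolynomial (Fin n) K) := by
  have hR : r - 1 ≠ 0 := by omega
  refine linearIndependent_of_injective_degree MonomialOrder.lex (fun p => ?_) fun p p' h => ?_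
  · exact expandMul_ne_zero hR p.2.2.1 (hallLittlewood_ne_zero hτ p.1.2.1)
  · simp only [powWheelBasis] at h
    rw [degree_expandMul hR p.2.2.1 (hallLittlewood_ne_zero hτ p.1.2.1),
      degree_expandMul hR p'.2.2.1 (hallLittlewood_ne_zero hτ p'.1.2.1),
      degree_hallLittlewood hτ p.1.2.1, degree_hallLittlewood hτ p'.1.2.1] at h
    obtain ⟨hadm, hslim⟩ := eq_and_eq_of_smul_add_eq p.1.2.1 p'.1.2.1 p.2.2.1 p'.2.2.1
      p.2.2.2 p'.2.2.2 (congrArg DFunLike.coe h)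
    exact Prod.ext (Subtype.ext (DFunLike.coe_injective hadm))
      (Subtype.ext (DFunLike.coe_injective hslim))

end Basis

section PowWheel

variable {K : Type*} [Field K] {n : ℕ} [NeZero n] (k r : ℕ) (t : K)

/-- The space `F_n^{(k,r)}`. When `q` is a primitive `(r - 1)`-th root of unity, the planes
`x j = t ^ j * q ^ s j * x 0` together form the locus where the powers `x j ^ (r - 1)` lie on the
wheel plane of `t ^ (r - 1)`. -/
noncomputable def powWheelSubmodule : Submodule K (MvPolynomial (Fin n) K) :=
  (symmetricSubalgebra (Fin n) K).toSubmodule ⊓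
    (vanishingIdeal K {z : Fin n → K |
      IsWheelPoint k (t ^ (r - 1)) (z ^ (r - 1))}).restrictScalars K

variable {k r t}

theorem mem_powWheelSubmodule {f : MvPolynomial (Fin n) K} :
    f ∈ powWheelSubmodule k r t ↔ f.IsSymmetric ∧
      ∀ z : Fin n → K, IsWheelPoint k (t ^ (r - 1)) (z ^ (r - 1)) → eval z f = 0 := Iff.rfl

theorem isWheelPoint_pow {z : Fin n → K} (hz : IsWheelPoint k t z) (R : ℕ) :
    IsWheelPoint k (t ^ R) (z ^ R) := fun j hj => by
  rw [Pi.pow_apply, hz j hj, mul_pow, pow_right_comm, Pi.pow_apply]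

theorem exists_eq_pow_mul_of_pow_eq {R : ℕ} [NeZero R] {q : K} (hq : IsPrimitiveRoot q R)
    {a b : K} (h : b ^ R = a ^ R) : ∃ s < R, b = q ^ s * a := by
  rcases eq_or_ne a 0 with rfl | ha
  · refine ⟨0, NeZero.pos R, ?_⟩
    rw [mul_zero, ← pow_eq_zero_iff (NeZero.ne R), h, zero_pow (NeZero.ne R)]
  · obtain ⟨s, hs, hqs⟩ := hq.eq_pow_of_pow_eq_one (ξ := b / a)
      (by rw [div_pow, h, div_self (pow_ne_zero _ ha)])
    exact ⟨s, hs, by rw [hqs, div_mul_cancel₀ _ ha]⟩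

theorem exists_forall_eq_of_isWheelPoint_pow {R : ℕ} [NeZero R] {q : K}
    (hq : IsPrimitiveRoot q R) {z : Fin n → K} (hz : IsWheelPoint k (t ^ R) (z ^ R)) :
    ∃ s : ℕ → ℕ, (∀ i, s i < R) ∧
      ∀ j : Fin n, (j : ℕ) ≤ k → z j = t ^ (j : ℕ) * q ^ s j * z 0 := by
  have hroot (j : Fin n) : ∃ a < R, (j : ℕ) ≤ k → z j = t ^ (j : ℕ) * q ^ a * z 0 := by
    by_cases hj : (j : ℕ) ≤ k
    · obtain ⟨a, ha, hza⟩ := exists_eq_pow_mul_of_pow_eq hq (a := t ^ (j : ℕ) * z 0) (b := z j)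
        (by rw [mul_pow, pow_right_comm]; exact hz j hj)
      exact ⟨a, ha, fun _ => by rw [hza]; ring⟩
    · exact ⟨0, NeZero.pos R, fun h => absurd h hj⟩
  choose a ha hza using hroot
  refine ⟨fun i => a (Fin.ofNat n i), fun i => ha _, fun j hj => ?_⟩
  simpa only [Fin.ofNat_val_eq_self] using hza j hj

theorem mem_powWheelSubmodule_iff_forall_planes (hr : 2 ≤ r) {q : K}
    (hq : IsPrimitiveRoot q (r - 1)) {f : MvPolynomial (Fin n) K} :
    f ∈ powWheelSubmodule k r t ↔ f.IsSymmetric ∧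
      ∀ s : ℕ → ℕ, (∀ i, s i ≤ r - 2) → ∀ (x : K) (y : Fin n → K),
        eval (fun j : Fin n => if (j : ℕ) = 0 then x
          else if (j : ℕ) ≤ k then t ^ (j : ℕ) * q ^ s j * x else y j) f = 0 := by
  have : NeZero (r - 1) := ⟨by omega⟩
  rw [mem_powWheelSubmodule]
  refine and_congr_right fun _ => ⟨fun hf s _ x y => hf _ fun j hj => ?_, fun hf z hz => ?_⟩
  · by_cases hj0 : j = 0
    · simp [hj0]
    · simp [hj0, hj, mul_pow, pow_right_comm _ _ (r - 1), hq.pow_eq_one]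
  · obtain ⟨s, hs, hzs⟩ := exists_forall_eq_of_isWheelPoint_pow hq hz
    convert hf s (fun i => by have := hs i; omega) (z 0) z using 2
    congr 1
    funext j
    split_ifs with hj0 hj
    · exact congrArg z (Fin.ext hj0)
    · exact hzs j hj
    · rfl

variable [CharZero K]

theorem eval_pow_eq_zero_of_sum_expandMul_mem (hr : 2 ≤ r) {q : K} (hq : IsPrimitiveRoot q (r - 1))
    {g : SlimPartition r n → MvPolynomial (Fin n) K}
    (hg : ∑ a, expandMul (r - 1) a.1 (g a) ∈ powWheelSubmodule k r t) {z : Fin n → K}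
    (hz : IsWheelPoint k t z) (hz0 : ∀ j, z j ≠ 0) (hinj : Function.Injective (z ^ (r - 1)))
    (a : SlimPartition r n) : eval (z ^ (r - 1)) (g a) = 0 := by
  have hzero : ∑ b, eval (z ^ (r - 1)) (g b) • (fun s : Fin n → Fin (r - 1) =>
      eval (fun j => q ^ (s j : ℕ) * z j) (symmMonomial K b.1)) = 0 := by
    funext s
    have hpow := pow_rootOfUnity_mul hq.pow_eq_one (fun j => (s j : ℕ)) z
    have hs := (mem_powWheelSubmodule.1 hg).2 (fun j => q ^ (s j : ℕ) * z j)
      (by rw [hpow]; exact isWheelPoint_pow hz _)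
    simpa [expandMul_apply, eval_expand, hpow] using hs
  exact Fintype.linearIndependent_iff.1 (linearIndependent_eval_symmMonomial hr hq hz0 hinj) _
    hzero a

/- Points of the wheel plane of `t` with nonzero coordinates and distinct `(r - 1)`-th powers are
dense: they are the nonzeros of `D` below, which does not vanish on the plane. -/
theorem wheelSubst_eq_zero_of_sum_expandMul_mem (hr : 2 ≤ r)
    (hτ : IsPrimitiveRoot (t ^ (r - 1)) (k + 1)) {q : K} (hq : IsPrimitiveRoot q (r - 1))
    {g : SlimPartition r n → MvPolynomial (Fin n) K}
    (hg : ∑ a, expandMul (r - 1) a.1 (g a) ∈ powWheelSubmodule k r t) (a : SlimPartition r n) :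
    wheelSubst k (t ^ (r - 1)) (g a) = 0 := by
  have hR : r - 1 ≠ 0 := by omega
  have ht0 : t ≠ 0 := ne_zero_pow hR (hτ.ne_zero k.succ_ne_zero)
  have hexpand := expand_injective (σ := Fin n) (R := K) (Nat.pos_of_ne_zero hR)
  let D : MvPolynomial (Fin n) K := (∏ j, X j) * expand (r - 1) (vandermondeDet K n)
  have hD : wheelSubst k t D ≠ 0 := by
    rw [map_mul, map_prod, wheelSubst_expand]
    refine mul_ne_zero (Finset.prod_ne_zero_iff.2 fun j _ => ?_)
      ((map_ne_zero_iff _ hexpand).2 (wheelSubst_vandermondeDet_ne_zero hτ))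
    rw [wheelSubst, aeval_X]
    exact wheelVar_ne_zero ht0 j
  suffices hmul : wheelSubst k t (expand (r - 1) (g a) * D) = 0 by
    rw [map_mul, wheelSubst_expand] at hmul
    exact (map_eq_zero_iff _ hexpand).1 ((mul_eq_zero.1 hmul).resolve_right hD)
  refine wheelSubst_eq_zero_iff.2 fun z hz => ?_
  by_cases hDz : eval z D = 0
  · rw [map_mul, hDz, mul_zero]
  simp only [D, map_mul, map_prod, eval_X, eval_expand, mul_eq_zero, not_or,
    Finset.prod_ne_zero_iff] at hDz
  obtain ⟨hz0, hvan⟩ := hDz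
  have hinj : Function.Injective (z ^ (r - 1)) := by
    rw [← Matrix.det_vandermonde_ne_zero_iff]
    simpa [vandermondeDet, Matrix.det_vandermonde] using hvan
  rw [map_mul, eval_expand, eval_pow_eq_zero_of_sum_expandMul_mem hr hq hg hz
    (fun j => hz0 j (Finset.mem_univ j)) hinj, zero_mul]

theorem expandMul_mem_powWheelSubmodule {g : MvPolynomial (Fin n) K}
    (hg : g ∈ wheelSubmodule k (t ^ (r - 1))) (a : Fin n →₀ ℕ) :
    expandMul (r - 1) a g ∈ powWheelSubmodule k r t := by
  obtain ⟨hsymm, hker⟩ := mem_wheelSubmodule.1 hg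
  refine mem_powWheelSubmodule.2 ⟨isSymmetric_expandMul _ _ hsymm, fun z hz => ?_⟩
  rw [expandMul_apply, map_mul, eval_expand, wheelSubst_eq_zero_iff.1 hker _ hz, zero_mul]

theorem powWheelSubmodule_eq_span (hr : 2 ≤ r) (hn : k < n)
    (hτ : IsPrimitiveRoot (t ^ (r - 1)) (k + 1)) {q : K} (hq : IsPrimitiveRoot q (r - 1)) :
    powWheelSubmodule k r t = Submodule.span K (Set.range (powWheelBasis (t ^ (r - 1)) :
      AdmissiblePartition k n × SlimPartition r n → MvPolynomial (Fin n) K)) := by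
  have hspan := wheelSubmodule_eq_span_hallLittlewood hτ hn
  refine le_antisymm (fun f hf => ?_) (Submodule.span_le.2 ?_)
  · obtain ⟨g, hg, rfl⟩ := exists_eq_sum_expandMul hr hf.1
    refine Submodule.sum_mem _ fun a _ => ?_
    have hmem : g a ∈ wheelSubmodule k (t ^ (r - 1)) :=
      ⟨hg a, wheelSubst_eq_zero_of_sum_expandMul_mem hr hτ hq hf a⟩
    have hmap := Submodule.mem_map_of_mem (f := expandMul (r - 1) a.1) (hspan ▸ hmem)
    rw [Submodule.map_span] at hmap
    refine Submodule.span_mono ?_ hmap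
    rintro _ ⟨_, ⟨d, hd, rfl⟩, rfl⟩
    exact ⟨(⟨d, hd⟩, a), rfl⟩
  · rintro _ ⟨p, rfl⟩
    refine expandMul_mem_powWheelSubmodule ?_ _
    rw [hspan]
    exact Submodule.subset_span ⟨p.1.1, p.1.2, rfl⟩

theorem powWheelSubmodule_inf_homogeneousSubmodule (hr : 2 ≤ r) (hn : k < n)
    (hτ : IsPrimitiveRoot (t ^ (r - 1)) (k + 1)) {q : K} (hq : IsPrimitiveRoot q (r - 1)) (m : ℕ) :
    powWheelSubmodule k r t ⊓ homogeneousSubmodule (Fin n) K m =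
      Submodule.span K (powWheelBasis (t ^ (r - 1)) ''
        {p : AdmissiblePartition k n × SlimPartition r n |
          (r - 1) * p.1.1.degree + p.2.1.degree = m}) := by
  have hspan := powWheelSubmodule_eq_span hr hn hτ hq
  refine le_antisymm (fun f hf => ?_) (Submodule.span_le.2 ?_)
  · exact mem_span_image_of_isHomogeneous (isHomogeneous_powWheelBasis _) (hspan ▸ hf.1) hf.2
  · rintro _ ⟨p, rfl, rfl⟩
    exact ⟨hspan ▸ Submodule.subset_span (Set.mem_range_self p), isHomogeneous_powWheelBasis _ p⟩

theorem finrank_powWheelSubmodule_inf_homogeneousSubmodule (hr : 2 ≤ r) (hn : k < n)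
    (hτ : IsPrimitiveRoot (t ^ (r - 1)) (k + 1)) {q : K} (hq : IsPrimitiveRoot q (r - 1)) (m : ℕ) :
    Module.finrank K ↥(powWheelSubmodule k r t ⊓ homogeneousSubmodule (Fin n) K m) =
      Nat.card {p : AdmissiblePartition k n × SlimPartition r n //
        (r - 1) * p.1.1.degree + p.2.1.degree = m} := by
  rw [powWheelSubmodule_inf_homogeneousSubmodule hr hn hτ hq, Set.image_eq_range]
  exact Module.finrank_eq_nat_card_basis <| Module.Basis.span <|
    (linearIndependent_powWheelBasis hr (hτ.ne_zero k.succ_ne_zero)).comp _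
      Subtype.val_injective

end PowWheel

theorem card_admissible_prod_slim (k r n m : ℕ) :
    Nat.card {p : AdmissiblePartition k n × SlimPartition r n //
        (r - 1) * p.1.1.degree + p.2.1.degree = m} =
      Nat.card {p : (Fin n → ℕ) × (Fin n → ℕ) |
        Antitone p.1 ∧ (∀ i : ℕ, (Finset.univ.filter fun a : Fin n => p.1 a = i).card ≤ k) ∧
        Antitone p.2 ∧ IsSlim r n p.2 ∧
        (r - 1) * (∑ a, p.1 a) + (∑ a, p.2 a) = m} := by
  let e : (Fin n →₀ ℕ) ≃ (Fin n → ℕ) := Finsupp.equivFunOnFinite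
  refine Nat.card_congr
    { toFun := fun p => ⟨(p.1.1.1, p.1.2.1), p.1.1.2.1, p.1.1.2.2, p.1.2.2.1, p.1.2.2.2, ?_⟩
      invFun := fun p => ⟨(⟨e.symm p.1.1, p.2.1, p.2.2.1⟩,
        ⟨e.symm p.1.2, p.2.2.2.1, p.2.2.2.2.1⟩), ?_⟩
      left_inv := fun p => ?_
      right_inv := fun p => rfl }
  · simpa only [Finsupp.degree_eq_sum] using p.2
  · simp only [Finsupp.degree_eq_sum]
    exact p.2.2.2.2.2
  · exact Subtype.ext (Prod.ext (Subtype.ext (e.symm_apply_apply _))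
      (Subtype.ext (e.symm_apply_apply _)))

end WheelCondition

open WheelCondition in
theorem dim_Fkr_homogeneous_eq_card_pairs_general {K : Type*} [Field K] [CharZero K]
    {k r : ℕ} (hr : 2 ≤ r) (hcop : Nat.Coprime (k + 1) (r - 1))
    {t q : K} (ht : IsPrimitiveRoot t (k + 1)) (hq : IsPrimitiveRoot q (r - 1))
    {n : ℕ} (m : ℕ) (hn : k < n) :
    Module.finrank K
      ↥(Submodule.span K {f : MvPolynomial (Fin n) K |
          f.IsSymmetric ∧
          (∀ (s : ℕ → ℕ), (∀ i, s i ≤ r - 2) → ∀ (x : K) (y : Fin n → K),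
            MvPolynomial.eval
              (fun j : Fin n => if (j : ℕ) = 0 then x
                else if (j : ℕ) ≤ k then t ^ (j : ℕ) * q ^ (s (j : ℕ)) * x else y j)
              f = 0) ∧
          f.IsHomogeneous m})
    = Nat.card {p : (Fin n → ℕ) × (Fin n → ℕ) |
        Antitone p.1 ∧
        (∀ i : ℕ, (Finset.univ.filter fun a : Fin n => p.1 a = i).card ≤ k) ∧
        Antitone p.2 ∧ IsSlim r n p.2 ∧
        (r - 1) * (∑ a, p.1 a) + (∑ a, p.2 a) = m} := by
  have : NeZero n := ⟨Nat.ne_zero_of_lt hn⟩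
  have hτ : IsPrimitiveRoot (t ^ (r - 1)) (k + 1) := ht.pow_of_coprime _ hcop.symm
  rw [← card_admissible_prod_slim, ← finrank_powWheelSubmodule_inf_homogeneousSubmodule hr hn hτ hq]
  refine congrArg (fun V : Submodule K (MvPolynomial (Fin n) K) => Module.finrank K V) ?_
  simp only [← and_assoc, ← mem_powWheelSubmodule_iff_forall_planes hr hq]
  exact Submodule.span_eq (powWheelSubmodule k r t ⊓ homogeneousSubmodule (Fin n) K m)

/-- character of `F^{(k,r)}`: for every `n > k` and `m ≥ 0`, the dimension
of the space of polynomials in `F_n^{(k,r)}` homogeneous of degree `m` equals the number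
of pairs `(λ, μ)` with `λ ∈ π_n` admissible, `μ ∈ π_n` `(r-1)`-slim, and
`(r-1)|λ| + |μ| = m`. -/
theorem dim_Fkr_homogeneous_eq_card_pairs
    (k r : ℕ) (hk : 0 < k) (hr : 2 ≤ r) (hcop : Nat.Coprime (k + 1) (r - 1))
    (t q : ℂ) (ht : IsPrimitiveRoot t (k + 1)) (hq : IsPrimitiveRoot q (r - 1))
    (n m : ℕ) (hn : k < n) :
    Module.finrank ℂ
      ↥(Submodule.span ℂ {f : MvPolynomial (Fin n) ℂ |
          f.IsSymmetric ∧
          (∀ (s : ℕ → ℕ), (∀ i, s i ≤ r - 2) → ∀ (x : ℂ) (y : Fin n → ℂ),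
            MvPolynomial.eval
              (fun j : Fin n => if (j : ℕ) = 0 then x
                else if (j : ℕ) ≤ k then t ^ (j : ℕ) * q ^ (s (j : ℕ)) * x else y j)
              f = 0) ∧
          f.IsHomogeneous m})
    = Nat.card {p : (Fin n → ℕ) × (Fin n → ℕ) |
        Antitone p.1 ∧
        (∀ i : ℕ, (Finset.univ.filter fun a : Fin n => p.1 a = i).card ≤ k) ∧
        Antitone p.2 ∧ IsSlim r n p.2 ∧
        (r - 1) * (∑ a, p.1 a) + (∑ a, p.2 a) = m} :=
  dim_Fkr_homogeneous_eq_card_pairs_general hr hcop ht hq m hn
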